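/- Let b be a D-sequence and let N be a natural number. Then the set of all k ∈ 𝕋 = ℝ/ℤ such that (i·b_m)·k ∈ 𝕋_+ for every m ≥ N and every integer i with 1 ≤ i ≤ q_{m+1} is a finite set (it is contained in the subgroup of elements annihilated by b_N, which has exactly b_N elements). -/

import Mathlib

/-- A `D`-sequence: `b 0 = 1`, consecutive terms are distinct, and each term
divides the next. -/
def IsDSequence (b : ℕ → ℕ) : Prop :=
  b 0 = 1 ∧ (∀ n, b n ≠ b (n + 1)) ∧ ∀ n, b n ∣ b (n + 1)

/-- For a D-sequence, `q (j+1) = b (j+1) / b j`. -/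
def qRatio (b : ℕ → ℕ) (j : ℕ) : ℕ := b (j + 1) / b j

/-- `𝕋_+`: the set of points of `𝕋 = ℝ/ℤ` at distance at most `1/4` from `0`. -/
def Tplus : Set (AddCircle (1 : ℝ)) := {x | ‖x‖ ≤ 1 / 4}

lemma exists_lift_norm (x : AddCircle (1 : ℝ)) :
    ∃ r : ℝ, (r : AddCircle (1 : ℝ)) = x ∧ |r| = ‖x‖ := by
  induction x using QuotientAddGroup.induction_on with
  | H y =>
    refine ⟨y - round y, ?_, ?_⟩
    · have h : ((round y : ℝ) : AddCircle (1 : ℝ)) = 0 := by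
        rw [AddCircle.coe_eq_zero_iff]
        exact ⟨round y, by simp⟩
      rw [AddCircle.coe_sub, h, sub_zero]
    · have h := AddCircle.norm_eq (p := (1 : ℝ)) (x := y)
      simp only [inv_one, one_mul, mul_one] at h
      exact h.symm

lemma norm_nsmul_of_le (x : AddCircle (1 : ℝ)) (q : ℕ)
    (h : ∀ i : ℕ, 1 ≤ i → i ≤ q → ‖i • x‖ ≤ 1 / 4) :
    ∀ i : ℕ, i ≤ q → ‖i • x‖ = i * ‖x‖ := by
  intro i
  induction i with
  | zero => intro _; simp
  | succ i ih =>
    intro hi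
    have h1 := ih (by omega)
    have hx : ‖x‖ ≤ 1 / 4 := by simpa using h 1 le_rfl (by omega)
    have h2 : (i : ℝ) * ‖x‖ ≤ 1 / 4 := by
      rcases Nat.eq_zero_or_pos i with h0 | h0
      · subst h0; norm_num
      · rw [← h1]; exact h i h0 (by omega)
    obtain ⟨r, rfl, hr⟩ := exists_lift_norm x
    have h3 : |((i + 1 : ℕ) : ℝ) * r| = ((i + 1 : ℕ) : ℝ) * |r| := by
      rw [abs_mul, Nat.abs_cast]
    rw [← AddCircle.coe_nsmul, nsmul_eq_mul, ← hr, ← h3,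
      AddCircle.norm_coe_eq_abs_iff _ one_ne_zero, h3, hr]
    push_cast
    rw [abs_one]
    linarith

theorem polar_is_finite (b : ℕ → ℕ) (hb : IsDSequence b) (N : ℕ) :
    {k : AddCircle (1 : ℝ) |
      ∀ m, N ≤ m → ∀ i : ℕ, 1 ≤ i → i ≤ qRatio b m → (i * b m) • k ∈ Tplus}.Finite := by
  obtain ⟨h0, hne, hdvd⟩ := hb
  have hpos : ∀ n, 0 < b n := by
    intro n
    rcases Nat.eq_zero_or_pos (b n) with h | h
    · have h1 := hdvd n
      rw [h, zero_dvd_iff] at h1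
      exact absurd (h.trans h1.symm) (hne n)
    · exact h
  have hq : ∀ n, qRatio b n * b n = b (n + 1) := fun n => Nat.div_mul_cancel (hdvd n)
  have hq2 : ∀ n, 2 ≤ qRatio b n := by
    intro n
    by_contra hlt
    have h1 := hq n
    have h2 := hpos (n + 1)
    have h3 := hne n
    interval_cases qRatio b n <;> omega
  refine (AddCircle.finite_torsion (1 : ℝ) (hpos N)).subset ?_
  intro k hk
  have step : ∀ m, N ≤ m → 2 * ‖b m • k‖ ≤ ‖b (m + 1) • k‖ := by
    intro m hm
    have h1 := norm_nsmul_of_le (b m • k) (qRatio b m) (fun i hi hi' => by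
      rw [← mul_nsmul']; exact hk m hm i hi hi') _ le_rfl
    rw [← mul_nsmul', hq] at h1
    rw [h1]
    exact mul_le_mul_of_nonneg_right (by exact_mod_cast hq2 m) (norm_nonneg _)
  have pw : ∀ j : ℕ, 2 ^ j * ‖b N • k‖ ≤ ‖b (N + j) • k‖ := by
    intro j
    induction j with
    | zero => simp
    | succ j ih =>
      have := step (N + j) (by omega)
      rw [pow_succ, ← add_assoc]
      linarith
  have bd : ∀ j : ℕ, 2 ^ j * ‖b N • k‖ ≤ 1 / 4 := by
    intro j
    have h1 : (1 * b (N + j)) • k ∈ Tplus :=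
      hk (N + j) (by omega) 1 le_rfl (by have := hq2 (N + j); omega)
    rw [one_mul] at h1
    exact (pw j).trans h1
  show b N • k = 0
  by_contra hne0
  have hp : 0 < ‖b N • k‖ := norm_pos_iff.mpr hne0
  obtain ⟨j, hj⟩ := pow_unbounded_of_one_lt (1 / ‖b N • k‖) (one_lt_two (α := ℝ))
  rw [div_lt_iff₀ hp] at hj
  linarith [bd j]
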